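/- arXiv:2511.10778 — 2 statements merged into one kernel-verified Lean document; each statement's English description precedes it below -/
import Mathlib

section
/- Let d ≥ 1, β > 0, and let M(v) = (β/(2π))^{d/2} exp(−β|v|²/2) be the Maxwellian density on ℝ^d. Let ω ∈ ℂ with Re ω > 0 and let φ : ℝ^d → ℝ be measurable with C₀ := ∫_{ℝ^d} |k| φ(k)² dk < ∞ and C₁ := ∫_{ℝ^d} (1+|k|²)^{1/2} φ(k)² dk < ∞. For v₀ ∈ ℝ^d define the complex d×d matrix A(v₀) with entries A_{ab}(v₀) = ∫_{ℝ^d} k_a k_b φ(k)² ( ∫_{ℝ^d} M(v₁) / (ω + i k·(v₁ − v₀)) dv₁ ) dk. Then A is continuously differentiable on ℝ^d, and there is a constant C = C(d, β) > 0, independent of ω and φ, such that for every compactly supported smooth g : ℝ^d → ℂ, ‖ div( A ∇g ) ‖_{L²(ℝ^d)} ≤ C · ( C₀ · ‖∇²g‖_{L²(ℝ^d)} + C₁ · ‖∇g‖_{L²(ℝ^d)} ). -/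
open MeasureTheory
open scoped ENNReal RealInnerProductSpace

/-- The Maxwellian density `M(v) = (β/(2π))^{d/2} exp(−β|v|²/2)` on `ℝ^d`. -/
noncomputable def maxwellian (d : ℕ) (β : ℝ) (v : EuclideanSpace ℝ (Fin d)) : ℝ :=
  (β / (2 * Real.pi)) ^ ((d : ℝ) / 2) * Real.exp (-β * ‖v‖ ^ 2 / 2)

/-- The matrix field `A(v₀)` with entries
`A_{ab}(v₀) = ∫ k_a k_b φ(k)² (∫ M(v₁)/(ω + i k·(v₁−v₀)) dv₁) dk`. -/
noncomputable def Amat (d : ℕ) (β : ℝ) (ω : ℂ) (φ : EuclideanSpace ℝ (Fin d) → ℝ)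
    (v₀ : EuclideanSpace ℝ (Fin d)) (a b : Fin d) : ℂ :=
  ∫ k : EuclideanSpace ℝ (Fin d),
    ((k a : ℝ) : ℂ) * ((k b : ℝ) : ℂ) * ((φ k : ℝ) : ℂ) ^ 2 *
      ∫ v₁, (maxwellian d β v₁ : ℂ) / (ω + Complex.I * ((⟪k, v₁ - v₀⟫ : ℝ) : ℂ))

/-!
For `Re ω > 0` the resolvent `1 / (ω + i k·(v₁ - v₀))` is the Laplace transform in time of the free
flow. Averaging over the Maxwellian first replaces it by `∫₀^∞ e^{-ωt + i t k·v₀ - t²|k|²/(2β)} dt`,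
where the Gaussian damping makes the integral `O(1/|k|)` uniformly in `ω`. A `v₀`-derivative costs a
factor `t|k|`, which the damping absorbs as well, so `A` and `∇A` are both bounded by multiples of
`C₀ = ∫ |k| φ²`. The estimate is then the Leibniz rule `div(A∇g) = A : ∇²g + (div A)·∇g`.
-/

open Set Filter

section GaussianLaplace

/-- The Laplace transform at `z` of `t ↦ t ^ m * exp (-s t²)` on the positive half-line. For `m = 0`
it is, up to normalization, the plasma dispersion (Faddeeva) function. -/
noncomputable def gaussianLaplace (m : ℕ) (s : ℝ) (z : ℂ) : ℂ :=
  ∫ t in Ioi (0 : ℝ), (t : ℂ) ^ m * Complex.exp (-z * t - s * t ^ 2)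

lemma integrableOn_pow_mul_exp_neg_mul (m : ℕ) {c : ℝ} (hc : 0 < c) :
    IntegrableOn (fun t : ℝ => t ^ m * Real.exp (-c * t)) (Ioi 0) := by
  have hm : (-1 : ℝ) < m := by linarith [m.cast_nonneg (α := ℝ)]
  simpa using integrableOn_rpow_mul_exp_neg_mul_rpow hm one_pos hc

lemma norm_pow_mul_cexp (m : ℕ) (s : ℝ) (z : ℂ) {t : ℝ} (ht : 0 ≤ t) :
    ‖(t : ℂ) ^ m * Complex.exp (-z * t - s * t ^ 2)‖ =
      t ^ m * Real.exp (-z.re * t - s * t ^ 2) := by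
  have hre : (-z * t - s * t ^ 2 : ℂ).re = -z.re * t - s * t ^ 2 := by
    simp [← Complex.ofReal_pow]
  rw [norm_mul, norm_pow, Complex.norm_of_nonneg ht, Complex.norm_exp, hre]

lemma norm_pow_mul_cexp_le_exp (m : ℕ) {s c t : ℝ} {z : ℂ} (hs : 0 ≤ s) (hz : c ≤ z.re)
    (ht : 0 ≤ t) :
    ‖(t : ℂ) ^ m * Complex.exp (-z * t - s * t ^ 2)‖ ≤ t ^ m * Real.exp (-c * t) := by
  rw [norm_pow_mul_cexp m s z ht]
  gcongr
  nlinarith [mul_le_mul_of_nonneg_right hz ht, mul_nonneg hs (sq_nonneg t)]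

lemma integrableOn_pow_mul_cexp (m : ℕ) {s : ℝ} {z : ℂ} (hs : 0 ≤ s) (hz : 0 < z.re) :
    IntegrableOn (fun t : ℝ => (t : ℂ) ^ m * Complex.exp (-z * t - s * t ^ 2)) (Ioi 0) := by
  refine (integrableOn_pow_mul_exp_neg_mul m hz).mono' (by fun_prop) ?_
  filter_upwards [ae_restrict_mem measurableSet_Ioi] with t ht
  exact norm_pow_mul_cexp_le_exp m hs le_rfl (le_of_lt ht)

lemma hasDerivAt_gaussianLaplace (m : ℕ) {s : ℝ} {z : ℂ} (hs : 0 ≤ s) (hz : 0 < z.re) :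
    HasDerivAt (gaussianLaplace m s) (-gaussianLaplace (m + 1) s z) z := by
  have hnhds : {x : ℂ | z.re / 2 < x.re} ∈ nhds z :=
    (isOpen_lt continuous_const Complex.continuous_re).mem_nhds (half_lt_self hz)
  have hderiv (t : ℝ) (x : ℂ) :
      HasDerivAt (fun x : ℂ => (t : ℂ) ^ m * Complex.exp (-x * t - s * t ^ 2))
        (-((t : ℂ) ^ (m + 1) * Complex.exp (-x * t - s * t ^ 2))) x := by
    have hexp := (((hasDerivAt_neg x).mul_const (t : ℂ)).sub_const ((s : ℂ) * t ^ 2)).cexp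
    exact (hexp.const_mul ((t : ℂ) ^ m)).congr_deriv (by ring)
  have hbound : ∀ᵐ t : ℝ ∂volume.restrict (Ioi 0), ∀ x ∈ {x : ℂ | z.re / 2 < x.re},
      ‖-((t : ℂ) ^ (m + 1) * Complex.exp (-x * t - s * t ^ 2))‖ ≤
        t ^ (m + 1) * Real.exp (-(z.re / 2) * t) := by
    filter_upwards [ae_restrict_mem measurableSet_Ioi] with t ht x hx
    rw [norm_neg]
    exact norm_pow_mul_cexp_le_exp (m + 1) hs (le_of_lt hx) (le_of_lt ht)
  have := (hasDerivAt_integral_of_dominated_loc_of_deriv_le (𝕜 := ℂ)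
    (μ := volume.restrict (Ioi 0))
    (F := fun (x : ℂ) (t : ℝ) => (t : ℂ) ^ m * Complex.exp (-x * t - s * t ^ 2))
    (F' := fun x t => -((t : ℂ) ^ (m + 1) * Complex.exp (-x * t - s * t ^ 2))) hnhds
    (.of_forall fun x => by fun_prop) (integrableOn_pow_mul_cexp m hs hz) (by fun_prop) hbound
    (integrableOn_pow_mul_exp_neg_mul (m + 1) (half_pos hz))
    (.of_forall fun t x _ => hderiv t x)).2
  rwa [integral_neg] at this

lemma stronglyMeasurable_gaussianLaplace (m : ℕ) :
    StronglyMeasurable fun p : ℝ × ℂ => gaussianLaplace m p.1 p.2 := by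
  refine StronglyMeasurable.integral_prod_right'
    (f := fun q : (ℝ × ℂ) × ℝ => (q.2 : ℂ) ^ m * Complex.exp (-q.1.2 * q.2 - q.1.1 * q.2 ^ 2)) ?_
  exact Continuous.stronglyMeasurable (by fun_prop)

lemma norm_gaussianLaplace_le (m : ℕ) {s : ℝ} {z : ℂ} (hs : 0 < s) (hz : 0 ≤ z.re) :
    ‖gaussianLaplace m s z‖ ≤
      s ^ (-((m + 1 : ℝ) / 2)) * (1 / 2) * Real.Gamma ((m + 1) / 2) := by
  have hm : (-1 : ℝ) < m := by linarith [m.cast_nonneg (α := ℝ)]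
  have hint := integrableOn_rpow_mul_exp_neg_mul_rpow hm two_pos hs
  have hval := integral_rpow_mul_exp_neg_mul_rpow two_pos hm hs
  simp only [Real.rpow_natCast, Real.rpow_two] at hint hval
  rw [← neg_div, ← hval]
  refine norm_integral_le_of_norm_le hint ?_
  filter_upwards [ae_restrict_mem measurableSet_Ioi] with t ht
  have ht : 0 < t := ht
  rw [norm_pow_mul_cexp m s z ht.le]
  gcongr
  nlinarith [mul_nonneg hz ht.le]

end GaussianLaplace

section DispersionKernel

variable {E : Type*} [NormedAddCommGroup E] [InnerProductSpace ℝ E]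

/-- The `m`-th moment of the damped streaming phase: `∫₀^∞ t ^ m e^{-ωt + i t⟨k, v⟩} M̂(tk) dt` with
`M̂(tk) = exp (-t²|k|²/(2β))` the Fourier transform of the Maxwellian. For `m = 0` it is the
resolvent average `∫ M(v₁) / (ω + i⟨k, v₁ - v⟩) dv₁`; higher `m` give its `v`-derivatives. -/
noncomputable def dispersionKernel (β : ℝ) (ω : ℂ) (m : ℕ) (k v : E) : ℂ :=
  gaussianLaplace m (‖k‖ ^ 2 / (2 * β)) (ω - Complex.I * (⟪k, v⟫ : ℝ))

/-- A bound for `‖k‖ ^ (m + 1) * ‖dispersionKernel β ω m k v‖`, uniform in `ω`, `k` and `v`. -/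
noncomputable def dispersionBound (β : ℝ) (m : ℕ) : ℝ :=
  (2 * β) ^ ((m + 1 : ℝ) / 2) * (1 / 2) * Real.Gamma ((m + 1) / 2)

lemma dispersionBound_pos {β : ℝ} (hβ : 0 < β) (m : ℕ) : 0 < dispersionBound β m := by
  unfold dispersionBound
  positivity

/-- The differential of `v ↦ ⟪k, v⟫`, with values in `ℂ`. -/
noncomputable def innerComplexL (k : E) : E →L[ℝ] ℂ :=
  Complex.ofRealCLM ∘L innerSL ℝ k

lemma norm_innerComplexL_le (k : E) : ‖innerComplexL k‖ ≤ ‖k‖ := by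
  simpa [innerComplexL] using Complex.ofRealCLM.opNorm_comp_le (innerSL ℝ k)

lemma continuous_innerComplexL : Continuous (innerComplexL : E → E →L[ℝ] ℂ) := by
  unfold innerComplexL
  fun_prop

lemma norm_pow_mul_dispersionKernel_le {β : ℝ} (hβ : 0 < β) {ω : ℂ} (hω : 0 ≤ ω.re) (m : ℕ)
    (k v : E) : ‖k‖ ^ (m + 1) * ‖dispersionKernel β ω m k v‖ ≤ dispersionBound β m := by
  rcases eq_or_ne k 0 with rfl | hk
  · simpa using (dispersionBound_pos hβ m).le
  have hk : 0 < ‖k‖ := norm_pos_iff.2 hk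
  have hscale : ‖k‖ ^ (m + 1) * (‖k‖ ^ 2 / (2 * β)) ^ (-((m + 1 : ℝ) / 2)) =
      (2 * β) ^ ((m + 1 : ℝ) / 2) := by
    have hpow : (‖k‖ ^ 2) ^ ((m + 1 : ℝ) / 2) = ‖k‖ ^ (m + 1) := by
      rw [← Real.rpow_natCast_mul hk.le, ← Real.rpow_natCast]
      congr 1
      push_cast
      ring
    rw [Real.rpow_neg (by positivity), Real.div_rpow (by positivity) (by positivity), hpow]
    field_simp
  calc ‖k‖ ^ (m + 1) * ‖dispersionKernel β ω m k v‖
      ≤ ‖k‖ ^ (m + 1) * ((‖k‖ ^ 2 / (2 * β)) ^ (-((m + 1 : ℝ) / 2)) * (1 / 2) *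
          Real.Gamma ((m + 1) / 2)) := by
        gcongr
        exact norm_gaussianLaplace_le m (by positivity) (by simpa using hω)
    _ = dispersionBound β m := by
        rw [dispersionBound, ← hscale]
        ring

lemma hasFDerivAt_dispersionKernel {β : ℝ} (hβ : 0 ≤ β) {ω : ℂ} (hω : 0 < ω.re) (m : ℕ)
    (k v : E) :
    HasFDerivAt (dispersionKernel β ω m k)
      ((Complex.I * dispersionKernel β ω (m + 1) k v) • innerComplexL k) v := by
  have hphase : HasFDerivAt (fun v => ω - Complex.I * (⟪k, v⟫ : ℝ))
      (-(Complex.I • innerComplexL k)) v :=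
    ((innerComplexL k).hasFDerivAt.const_mul Complex.I).const_sub ω
  have hre : 0 < (ω - Complex.I * (⟪k, v⟫ : ℝ)).re := by simpa using hω
  have hs : 0 ≤ ‖k‖ ^ 2 / (2 * β) := by positivity
  refine ((hasDerivAt_gaussianLaplace m hs hre).comp_hasFDerivAt v hphase).congr_fderiv ?_
  rw [smul_neg, neg_smul, neg_neg, smul_smul, mul_comm, dispersionKernel]

lemma continuous_dispersionKernel {β : ℝ} (hβ : 0 ≤ β) {ω : ℂ} (hω : 0 < ω.re) (m : ℕ) (k : E) :
    Continuous (dispersionKernel β ω m k) :=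
  continuous_iff_continuousAt.2 fun v => (hasFDerivAt_dispersionKernel hβ hω m k v).continuousAt

lemma stronglyMeasurable_dispersionKernel [MeasurableSpace E] [OpensMeasurableSpace E]
    (β : ℝ) (ω : ℂ) (m : ℕ) (v : E) :
    StronglyMeasurable fun k => dispersionKernel β ω m k v := by
  have hparam : Measurable fun k : E => (‖k‖ ^ 2 / (2 * β), ω - Complex.I * (⟪k, v⟫ : ℝ)) :=
    Continuous.measurable (by fun_prop)
  have := (stronglyMeasurable_gaussianLaplace m).comp_measurable hparam
  simpa only [dispersionKernel, Function.comp_def] using this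

end DispersionKernel

section Maxwellian

variable {d : ℕ} {β : ℝ}

lemma ofReal_maxwellian_mul_cexp (v : EuclideanSpace ℝ (Fin d)) (z : ℂ) :
    (maxwellian d β v : ℂ) * Complex.exp z =
      ((β / (2 * Real.pi)) ^ ((d : ℝ) / 2) : ℝ) *
        Complex.exp (-(β / 2 : ℝ) * ‖v‖ ^ 2 + z) := by
  rw [maxwellian, Complex.ofReal_mul, mul_assoc, Complex.ofReal_exp, ← Complex.exp_add]
  push_cast
  ring_nf

lemma continuous_maxwellian : Continuous (maxwellian d β) := by
  unfold maxwellian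
  fun_prop

lemma integrable_maxwellian (hβ : 0 < β) :
    Integrable fun v : EuclideanSpace ℝ (Fin d) => (maxwellian d β v : ℂ) := by
  have hre : 0 < ((β / 2 : ℝ) : ℂ).re := by
    rw [Complex.ofReal_re]
    positivity
  have h := GaussianFourier.integrable_cexp_neg_mul_sq_norm_add hre 0
    (0 : EuclideanSpace ℝ (Fin d))
  refine (h.const_mul (((β / (2 * Real.pi)) ^ ((d : ℝ) / 2) : ℝ) : ℂ)).congr
    (.of_forall fun v => ?_)
  simpa using (ofReal_maxwellian_mul_cexp v 0).symm

lemma integral_maxwellian_mul_cexp_inner (hβ : 0 < β) (c : ℂ) (k : EuclideanSpace ℝ (Fin d)) :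
    ∫ v, (maxwellian d β v : ℂ) * Complex.exp (c * (⟪k, v⟫ : ℝ)) =
      Complex.exp (c ^ 2 * ‖k‖ ^ 2 / (2 * β)) := by
  have hre : 0 < ((β / 2 : ℝ) : ℂ).re := by
    rw [Complex.ofReal_re]
    positivity
  have hmass : (((β / (2 * Real.pi)) ^ ((d : ℝ) / 2) : ℝ) : ℂ) *
      ((Real.pi : ℂ) / (β / 2 : ℝ)) ^
        ((Module.finrank ℝ (EuclideanSpace ℝ (Fin d)) : ℂ) / 2) = 1 := by
    have hcast : ((Real.pi : ℂ) / (β / 2 : ℝ)) ^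
        ((Module.finrank ℝ (EuclideanSpace ℝ (Fin d)) : ℂ) / 2) =
          ((Real.pi / (β / 2)) ^ ((d : ℝ) / 2) : ℝ) := by
      rw [Complex.ofReal_cpow (by positivity)]
      simp
    have hone : β / (2 * Real.pi) * (Real.pi / (β / 2)) = 1 := by field_simp
    rw [hcast, ← Complex.ofReal_mul, ← Real.mul_rpow (by positivity) (by positivity), hone,
      Real.one_rpow, Complex.ofReal_one]
  simp_rw [ofReal_maxwellian_mul_cexp]
  rw [integral_const_mul, GaussianFourier.integral_cexp_neg_mul_sq_norm_add hre, ← mul_assoc,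
    hmass, one_mul]
  push_cast
  ring_nf

lemma integrable_maxwellian_mul_cexp_prod (hβ : 0 < β) {ω : ℂ} (hω : 0 < ω.re)
    (k v₀ : EuclideanSpace ℝ (Fin d)) :
    Integrable (fun p : EuclideanSpace ℝ (Fin d) × ℝ =>
      (maxwellian d β p.1 : ℂ) *
        Complex.exp (-(ω + Complex.I * (⟪k, p.1 - v₀⟫ : ℝ)) * p.2))
      (volume.prod (volume.restrict (Ioi 0))) := by
  have hdom := (integrable_maxwellian (d := d) hβ).mul_prod
    ((integrableOn_pow_mul_exp_neg_mul 0 hω).ofReal (𝕜 := ℂ))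
  have := continuous_maxwellian (d := d) (β := β)
  refine hdom.mono (Continuous.aestronglyMeasurable (by fun_prop)) (.of_forall fun p => ?_)
  simp [Complex.norm_exp]

lemma integral_maxwellian_div_eq_dispersionKernel (hβ : 0 < β) {ω : ℂ} (hω : 0 < ω.re)
    (k v₀ : EuclideanSpace ℝ (Fin d)) :
    ∫ v₁, (maxwellian d β v₁ : ℂ) / (ω + Complex.I * (⟪k, v₁ - v₀⟫ : ℝ)) =
      dispersionKernel β ω 0 k v₀ := by
  have hresolvent (v₁ : EuclideanSpace ℝ (Fin d)) :
      (maxwellian d β v₁ : ℂ) / (ω + Complex.I * (⟪k, v₁ - v₀⟫ : ℝ)) =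
        ∫ t in Ioi (0 : ℝ), (maxwellian d β v₁ : ℂ) *
          Complex.exp (-(ω + Complex.I * (⟪k, v₁ - v₀⟫ : ℝ)) * t) := by
    rw [integral_const_mul, integral_exp_mul_complex_Ioi (by simpa using hω), Complex.ofReal_zero,
      mul_zero, Complex.exp_zero, neg_div_neg_eq, mul_one_div]
  have hflow (t : ℝ) (v₁ : EuclideanSpace ℝ (Fin d)) :
      (maxwellian d β v₁ : ℂ) * Complex.exp (-(ω + Complex.I * (⟪k, v₁ - v₀⟫ : ℝ)) * t) =
        Complex.exp (-(ω - Complex.I * (⟪k, v₀⟫ : ℝ)) * t) *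
          ((maxwellian d β v₁ : ℂ) * Complex.exp (-Complex.I * t * (⟪k, v₁⟫ : ℝ))) := by
    rw [mul_left_comm, ← Complex.exp_add, inner_sub_right]
    push_cast
    ring_nf
  simp_rw [hresolvent]
  rw [integral_integral_swap (integrable_maxwellian_mul_cexp_prod hβ hω k v₀)]
  refine integral_congr_ae (.of_forall fun t => ?_)
  simp_rw [hflow]
  rw [integral_const_mul, integral_maxwellian_mul_cexp_inner hβ, ← Complex.exp_add, mul_pow,
    neg_sq, Complex.I_sq]
  push_cast
  ring_nf

end Maxwellian

section DispersionIntegral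

variable {E : Type*} [NormedAddCommGroup E] [InnerProductSpace ℝ E] {β : ℝ} {ω : ℂ}

lemma norm_mul_dispersionKernel_zero_le (hβ : 0 < β) (hω : 0 ≤ ω.re) (w : E → ℂ) (k v : E) :
    ‖w k * ‖k‖ * dispersionKernel β ω 0 k v‖ ≤ dispersionBound β 0 * ‖w k‖ := by
  have hK := norm_pow_mul_dispersionKernel_le hβ hω 0 k v
  rw [zero_add, pow_one] at hK
  calc ‖w k * ‖k‖ * dispersionKernel β ω 0 k v‖
      = ‖k‖ * ‖dispersionKernel β ω 0 k v‖ * ‖w k‖ := by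
        rw [norm_mul, norm_mul, Complex.norm_of_nonneg (norm_nonneg k)]
        ring
    _ ≤ dispersionBound β 0 * ‖w k‖ := by gcongr

lemma norm_smul_innerComplexL_le (hβ : 0 < β) (hω : 0 ≤ ω.re) (w : E → ℂ) (k v : E) :
    ‖(w k * ‖k‖ * (Complex.I * dispersionKernel β ω 1 k v)) • innerComplexL k‖ ≤
      dispersionBound β 1 * ‖w k‖ := by
  calc ‖(w k * ‖k‖ * (Complex.I * dispersionKernel β ω 1 k v)) • innerComplexL k‖
      = ‖w k‖ * ‖k‖ * ‖dispersionKernel β ω 1 k v‖ * ‖innerComplexL k‖ := by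
        rw [norm_smul, norm_mul, norm_mul, norm_mul, Complex.norm_I, one_mul,
          Complex.norm_of_nonneg (norm_nonneg k)]
    _ ≤ ‖w k‖ * ‖k‖ * ‖dispersionKernel β ω 1 k v‖ * ‖k‖ := by
        gcongr
        exact norm_innerComplexL_le k
    _ = ‖k‖ ^ (1 + 1) * ‖dispersionKernel β ω 1 k v‖ * ‖w k‖ := by ring
    _ ≤ dispersionBound β 1 * ‖w k‖ := by
        gcongr
        exact norm_pow_mul_dispersionKernel_le hβ hω 1 k v

variable [MeasurableSpace E] {μ : Measure E} {w : E → ℂ}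

/-- The superposition `∫ w(k) |k| (∫ M(v₁) / (ω + i⟨k, v₁ - v⟩) dv₁) dμ(k)` of resolvent averages.
The factor `|k|` is what the resolvent average must be multiplied by to be bounded in `k`. -/
noncomputable def dispersionIntegral (μ : Measure E) (β : ℝ) (ω : ℂ) (w : E → ℂ) (v : E) : ℂ :=
  ∫ k, w k * ‖k‖ * dispersionKernel β ω 0 k v ∂μ

/-- The candidate for the differential of `dispersionIntegral μ β ω w` at `v`, obtained by
differentiating under the integral sign. -/
noncomputable def dispersionIntegralFDeriv (μ : Measure E) (β : ℝ) (ω : ℂ) (w : E → ℂ) (v : E) :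
    E →L[ℝ] ℂ :=
  ∫ k, (w k * ‖k‖ * (Complex.I * dispersionKernel β ω 1 k v)) • innerComplexL k ∂μ

lemma norm_dispersionIntegral_le (hβ : 0 < β) (hω : 0 ≤ ω.re) (hw : Integrable w μ) (v : E) :
    ‖dispersionIntegral μ β ω w v‖ ≤ dispersionBound β 0 * ∫ k, ‖w k‖ ∂μ := by
  rw [← integral_const_mul]
  exact norm_integral_le_of_norm_le (hw.norm.const_mul _)
    (.of_forall fun k => norm_mul_dispersionKernel_zero_le hβ hω w k v)

lemma norm_dispersionIntegralFDeriv_le (hβ : 0 < β) (hω : 0 ≤ ω.re) (hw : Integrable w μ)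
    (v : E) : ‖dispersionIntegralFDeriv μ β ω w v‖ ≤ dispersionBound β 1 * ∫ k, ‖w k‖ ∂μ := by
  rw [← integral_const_mul]
  exact norm_integral_le_of_norm_le (hw.norm.const_mul _)
    (.of_forall fun k => norm_smul_innerComplexL_le hβ hω w k v)

variable [OpensMeasurableSpace E]

lemma aestronglyMeasurable_mul_dispersionKernel (β : ℝ) (ω : ℂ) (m : ℕ)
    (hw : AEStronglyMeasurable w μ) (v : E) :
    AEStronglyMeasurable (fun k => w k * ‖k‖ * dispersionKernel β ω m k v) μ :=
  (hw.mul (Complex.continuous_ofReal.comp continuous_norm).aestronglyMeasurable).mul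
    (stronglyMeasurable_dispersionKernel β ω m v).aestronglyMeasurable

variable [SecondCountableTopology E]

lemma aestronglyMeasurable_smul_innerComplexL (β : ℝ) (ω : ℂ)
    (hw : AEStronglyMeasurable w μ) (v : E) :
    AEStronglyMeasurable (fun k =>
      (w k * ‖k‖ * (Complex.I * dispersionKernel β ω 1 k v)) • innerComplexL k) μ := by
  simp_rw [mul_left_comm _ Complex.I]
  exact ((aestronglyMeasurable_mul_dispersionKernel β ω 1 hw v).const_mul _).smul
    continuous_innerComplexL.aestronglyMeasurable

lemma hasFDerivAt_dispersionIntegral (hβ : 0 < β) (hω : 0 < ω.re) (hw : Integrable w μ) (v : E) :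
    HasFDerivAt (dispersionIntegral μ β ω w) (dispersionIntegralFDeriv μ β ω w v) v := by
  have hmeas := aestronglyMeasurable_mul_dispersionKernel β ω 0 hw.aestronglyMeasurable
  refine hasFDerivAt_integral_of_dominated_of_fderiv_le (𝕜 := ℝ) univ_mem
    (.of_forall hmeas) ?_
    (aestronglyMeasurable_smul_innerComplexL β ω hw.aestronglyMeasurable v)
    (.of_forall fun k x _ => norm_smul_innerComplexL_le hβ hω.le w k x)
    (hw.norm.const_mul _) (.of_forall fun k x _ => ?_)
  · exact (hw.norm.const_mul _).mono' (hmeas v)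
      (.of_forall fun k => norm_mul_dispersionKernel_zero_le hβ hω.le w k v)
  · have h := (hasFDerivAt_dispersionKernel hβ.le hω 0 k x).const_mul (w k * ‖k‖)
    rwa [smul_smul] at h

lemma continuous_dispersionIntegralFDeriv (hβ : 0 < β) (hω : 0 < ω.re) (hw : Integrable w μ) :
    Continuous (dispersionIntegralFDeriv μ β ω w) := by
  refine continuous_of_dominated
    (aestronglyMeasurable_smul_innerComplexL β ω hw.aestronglyMeasurable)
    (fun v => .of_forall fun k => norm_smul_innerComplexL_le hβ hω.le w k v)
    (hw.norm.const_mul _) (.of_forall fun k => ?_)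
  have := continuous_dispersionKernel hβ.le hω 1 k
  fun_prop

lemma contDiff_dispersionIntegral (hβ : 0 < β) (hω : 0 < ω.re) (hw : Integrable w μ) :
    ContDiff ℝ 1 (dispersionIntegral μ β ω w) :=
  contDiff_one_iff_hasFDerivAt.2 ⟨_, continuous_dispersionIntegralFDeriv hβ hω hw,
    hasFDerivAt_dispersionIntegral hβ hω hw⟩

end DispersionIntegral

section DivergenceForm

variable {E : Type*} [NormedAddCommGroup E] [NormedSpace ℝ E]

lemma norm_fderiv_mul_fderiv_apply_le {A g : E → ℂ} {v : E} (hA : DifferentiableAt ℝ A v)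
    (hg : ContDiffAt ℝ 2 g v) {x y : E} (hx : ‖x‖ ≤ 1) (hy : ‖y‖ ≤ 1) :
    ‖fderiv ℝ (fun w => A w * fderiv ℝ g w y) v x‖ ≤
      ‖A v‖ * ‖iteratedFDeriv ℝ 2 g v‖ + ‖fderiv ℝ A v‖ * ‖fderiv ℝ g v‖ := by
  have hg' : DifferentiableAt ℝ (fderiv ℝ g) v :=
    (hg.fderiv_right (m := 1) le_rfl).differentiableAt one_ne_zero
  have hhess : ‖fderiv ℝ (fderiv ℝ g) v x y‖ ≤ ‖iteratedFDeriv ℝ 2 g v‖ := by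
    have h := (iteratedFDeriv ℝ 2 g v).le_opNorm_mul_prod_of_le (m := ![x, y]) (b := fun _ => 1)
      (Fin.forall_fin_two.2 ⟨hx, hy⟩)
    simpa [iteratedFDeriv_two_apply] using h
  have hgrad : ‖fderiv ℝ g v y‖ ≤ ‖fderiv ℝ g v‖ := (fderiv ℝ g v).unit_le_opNorm y hy
  have hA' : ‖fderiv ℝ A v x‖ ≤ ‖fderiv ℝ A v‖ := (fderiv ℝ A v).unit_le_opNorm x hx
  have hleibniz : fderiv ℝ (fun w => A w * fderiv ℝ g w y) v x =
      A v * fderiv ℝ (fderiv ℝ g) v x y + fderiv ℝ A v x * fderiv ℝ g v y := by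
    rw [fderiv_fun_mul hA (hg'.clm_apply (differentiableAt_const y)),
      fderiv_clm_apply hg' (differentiableAt_const y)]
    simp [mul_comm]
  calc ‖fderiv ℝ (fun w => A w * fderiv ℝ g w y) v x‖
      ≤ ‖A v‖ * ‖fderiv ℝ (fderiv ℝ g) v x y‖ + ‖fderiv ℝ A v x‖ * ‖fderiv ℝ g v y‖ := by
        rw [hleibniz, ← norm_mul, ← norm_mul]
        exact norm_add_le _ _
    _ ≤ _ := by gcongr

lemma norm_sum_fderiv_mul_fderiv_apply_le {ι : Type*} [Fintype ι] {A : ι → ι → E → ℂ} {g : E → ℂ}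
    {v : E} {K : ℝ} {e : ι → E} (he : ∀ a, ‖e a‖ ≤ 1) (hA : ∀ a b, DifferentiableAt ℝ (A a b) v)
    (hA₀ : ∀ a b, ‖A a b v‖ ≤ K) (hA₁ : ∀ a b, ‖fderiv ℝ (A a b) v‖ ≤ K)
    (hg : ContDiffAt ℝ 2 g v) :
    ‖∑ a, ∑ b, fderiv ℝ (fun w => A a b w * fderiv ℝ g w (e b)) v (e a)‖ ≤
      Fintype.card ι ^ 2 * K * (‖iteratedFDeriv ℝ 2 g v‖ + ‖fderiv ℝ g v‖) := by
  have hterm (a b : ι) : ‖fderiv ℝ (fun w => A a b w * fderiv ℝ g w (e b)) v (e a)‖ ≤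
      K * (‖iteratedFDeriv ℝ 2 g v‖ + ‖fderiv ℝ g v‖) := by
    refine (norm_fderiv_mul_fderiv_apply_le (hA a b) hg (he a) (he b)).trans ?_
    rw [mul_add]
    gcongr
    exacts [hA₀ a b, hA₁ a b]
  refine (norm_sum_le_of_le _ fun a _ => norm_sum_le_of_le _ fun b _ => hterm a b).trans_eq ?_
  simp only [Finset.sum_const, Finset.card_univ, nsmul_eq_mul]
  ring

end DivergenceForm

lemma toReal_eLpNorm_le_mul_add_of_norm_le {α F₀ F₁ F₂ : Type*} [MeasurableSpace α]
    {μ : Measure α} [NormedAddCommGroup F₀] [NormedAddCommGroup F₁] [NormedAddCommGroup F₂]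
    {p : ℝ≥0∞} {f : α → F₀} {f₁ : α → F₁} {f₂ : α → F₂} {c : ℝ} (hp : 1 ≤ p) (hc : 0 ≤ c)
    (h₁ : MemLp f₁ p μ) (h₂ : MemLp f₂ p μ) (h : ∀ x, ‖f x‖ ≤ c * (‖f₁ x‖ + ‖f₂ x‖)) :
    (eLpNorm f p μ).toReal ≤ c * ((eLpNorm f₁ p μ).toReal + (eLpNorm f₂ p μ).toReal) := by
  have hdom : MemLp (c • ((‖f₁ ·‖) + (‖f₂ ·‖))) p μ := (h₁.norm.add h₂.norm).const_smul c
  calc (eLpNorm f p μ).toReal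
      ≤ (eLpNorm (c • ((‖f₁ ·‖) + (‖f₂ ·‖))) p μ).toReal :=
        ENNReal.toReal_mono hdom.eLpNorm_ne_top (eLpNorm_mono_real h)
    _ = c * lpNorm ((‖f₁ ·‖) + (‖f₂ ·‖)) p μ := by
        rw [toReal_eLpNorm hdom.aestronglyMeasurable, lpNorm_const_smul, coe_nnnorm,
          Real.norm_of_nonneg hc]
    _ ≤ c * (lpNorm (‖f₁ ·‖) p μ + lpNorm (‖f₂ ·‖) p μ) := by
        gcongr
        exact lpNorm_add_le h₁.norm hp
    _ = c * ((eLpNorm f₁ p μ).toReal + (eLpNorm f₂ p μ).toReal) := by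
        rw [lpNorm_norm h₁.1, lpNorm_norm h₂.1, toReal_eLpNorm h₁.1, toReal_eLpNorm h₂.1]

section CompactSupport

variable {E F : Type*} [NormedAddCommGroup E] [NormedSpace ℝ E] [NormedAddCommGroup F]
  [NormedSpace ℝ F] [MeasurableSpace E] [OpensMeasurableSpace E] {μ : Measure E}
  [IsFiniteMeasureOnCompacts μ] {g : E → F} {n : WithTop ℕ∞} {p : ℝ≥0∞}

lemma memLp_iteratedFDeriv_of_hasCompactSupport {m : ℕ} (hg : ContDiff ℝ n g)
    (hgc : HasCompactSupport g) (hm : m ≤ n) : MemLp (iteratedFDeriv ℝ m g) p μ :=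
  (hg.continuous_iteratedFDeriv hm).memLp_of_hasCompactSupport (hgc.iteratedFDeriv m)

lemma memLp_fderiv_of_hasCompactSupport (hg : ContDiff ℝ n g) (hgc : HasCompactSupport g)
    (hn : n ≠ 0) : MemLp (fderiv ℝ g) p μ :=
  (hg.continuous_fderiv hn).memLp_of_hasCompactSupport (hgc.fderiv ℝ)

end CompactSupport

section Amat

variable {d : ℕ} {β : ℝ} {ω : ℂ} {φ : EuclideanSpace ℝ (Fin d) → ℝ}

/-- The weight `k_a k_b φ(k)² / |k|`, for which `dispersionIntegral` is the entry `A_{ab}`. It is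
split so that the integrable factor `|k| φ(k)²` is visible; at `k = 0` the division by zero gives
`0`, in agreement with `k_a k_b φ(k)²`. -/
noncomputable def amatWeight (φ : EuclideanSpace ℝ (Fin d) → ℝ) (a b : Fin d)
    (k : EuclideanSpace ℝ (Fin d)) : ℂ :=
  (k a * k b / ‖k‖ ^ 2 : ℝ) * (‖k‖ * φ k ^ 2 : ℝ)

lemma norm_mul_div_norm_sq_le_one (a b : Fin d) (k : EuclideanSpace ℝ (Fin d)) :
    ‖((k a * k b / ‖k‖ ^ 2 : ℝ) : ℂ)‖ ≤ 1 := by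
  rw [Complex.norm_real, norm_div, norm_mul, norm_pow, norm_norm, sq]
  refine div_le_one_of_le₀ ?_ (by positivity)
  gcongr <;> exact PiLp.norm_apply_le k _

lemma norm_amatWeight_le (φ : EuclideanSpace ℝ (Fin d) → ℝ) (a b : Fin d)
    (k : EuclideanSpace ℝ (Fin d)) : ‖amatWeight φ a b k‖ ≤ ‖k‖ * φ k ^ 2 := by
  rw [amatWeight, norm_mul, Complex.norm_of_nonneg (r := ‖k‖ * φ k ^ 2) (by positivity)]
  exact mul_le_of_le_one_left (by positivity) (norm_mul_div_norm_sq_le_one a b k)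

lemma integrable_amatWeight (hφ : Integrable fun k => ‖k‖ * φ k ^ 2) (a b : Fin d) :
    Integrable (amatWeight φ a b) :=
  hφ.ofReal.bdd_mul (Measurable.aestronglyMeasurable (by fun_prop))
    (.of_forall (norm_mul_div_norm_sq_le_one a b))

lemma integral_norm_amatWeight_le (hφ : Integrable fun k => ‖k‖ * φ k ^ 2) (a b : Fin d) :
    ∫ k, ‖amatWeight φ a b k‖ ≤ ∫ k, ‖k‖ * φ k ^ 2 :=
  integral_mono (integrable_amatWeight hφ a b).norm hφ (norm_amatWeight_le φ a b)

lemma Amat_eq_dispersionIntegral (hβ : 0 < β) (hω : 0 < ω.re) (φ : EuclideanSpace ℝ (Fin d) → ℝ)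
    (a b : Fin d) :
    (fun v₀ => Amat d β ω φ v₀ a b) = dispersionIntegral volume β ω (amatWeight φ a b) := by
  have hweight (k : EuclideanSpace ℝ (Fin d)) :
      (k a : ℂ) * (k b : ℂ) * (φ k : ℂ) ^ 2 = amatWeight φ a b k * ‖k‖ := by
    rcases eq_or_ne k 0 with rfl | hk
    · simp
    have hk : ‖k‖ ≠ 0 := norm_ne_zero_iff.2 hk
    rw [amatWeight]
    norm_cast
    field_simp
  funext v₀
  simp_rw [Amat, dispersionIntegral, integral_maxwellian_div_eq_dispersionKernel hβ hω, hweight]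

lemma contDiff_Amat (hβ : 0 < β) (hω : 0 < ω.re) (hφ : Integrable fun k => ‖k‖ * φ k ^ 2)
    (a b : Fin d) : ContDiff ℝ 1 fun v₀ => Amat d β ω φ v₀ a b := by
  rw [Amat_eq_dispersionIntegral hβ hω]
  exact contDiff_dispersionIntegral hβ hω (integrable_amatWeight hφ a b)

lemma norm_Amat_le (hβ : 0 < β) (hω : 0 < ω.re) (hφ : Integrable fun k => ‖k‖ * φ k ^ 2)
    (v₀ : EuclideanSpace ℝ (Fin d)) (a b : Fin d) :
    ‖Amat d β ω φ v₀ a b‖ ≤ dispersionBound β 0 * ∫ k, ‖k‖ * φ k ^ 2 := by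
  rw [congrFun (Amat_eq_dispersionIntegral hβ hω φ a b) v₀]
  exact (norm_dispersionIntegral_le hβ hω.le (integrable_amatWeight hφ a b) v₀).trans
    (mul_le_mul_of_nonneg_left (integral_norm_amatWeight_le hφ a b) (dispersionBound_pos hβ 0).le)

lemma norm_fderiv_Amat_le (hβ : 0 < β) (hω : 0 < ω.re) (hφ : Integrable fun k => ‖k‖ * φ k ^ 2)
    (v₀ : EuclideanSpace ℝ (Fin d)) (a b : Fin d) :
    ‖fderiv ℝ (fun w => Amat d β ω φ w a b) v₀‖ ≤ dispersionBound β 1 * ∫ k, ‖k‖ * φ k ^ 2 := by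
  have hw := integrable_amatWeight hφ a b
  rw [Amat_eq_dispersionIntegral hβ hω, (hasFDerivAt_dispersionIntegral hβ hω hw v₀).fderiv]
  exact (norm_dispersionIntegralFDeriv_le hβ hω.le hw v₀).trans
    (mul_le_mul_of_nonneg_left (integral_norm_amatWeight_le hφ a b) (dispersionBound_pos hβ 1).le)

lemma norm_div_Amat_grad_le (hβ : 0 < β) (hω : 0 < ω.re)
    (hφ : Integrable fun k => ‖k‖ * φ k ^ 2) {g : EuclideanSpace ℝ (Fin d) → ℂ}
    {v₀ : EuclideanSpace ℝ (Fin d)} (hg : ContDiffAt ℝ 2 g v₀) :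
    ‖∑ a : Fin d, ∑ b : Fin d,
        fderiv ℝ (fun w => Amat d β ω φ w a b * fderiv ℝ g w (EuclideanSpace.single b 1))
          v₀ (EuclideanSpace.single a 1)‖ ≤
      d ^ 2 * ((dispersionBound β 0 + dispersionBound β 1) * ∫ k, ‖k‖ * φ k ^ 2) *
        (‖iteratedFDeriv ℝ 2 g v₀‖ + ‖fderiv ℝ g v₀‖) := by
  have hA (a b : Fin d) : DifferentiableAt ℝ (fun w => Amat d β ω φ w a b) v₀ :=
    (contDiff_Amat hβ hω hφ a b).differentiable one_ne_zero v₀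
  have h := norm_sum_fderiv_mul_fderiv_apply_le (e := fun a : Fin d => EuclideanSpace.single a 1)
    (A := fun a b w => Amat d β ω φ w a b)
    (K := (dispersionBound β 0 + dispersionBound β 1) * ∫ k, ‖k‖ * φ k ^ 2) (by simp) hA
    (fun a b => (norm_Amat_le hβ hω hφ v₀ a b).trans ?_)
    (fun a b => (norm_fderiv_Amat_le hβ hω hφ v₀ a b).trans ?_) hg
  · simpa only [Fintype.card_fin] using h
  · gcongr
    exact le_add_of_nonneg_right (dispersionBound_pos hβ 1).le
  · gcongr
    exact le_add_of_nonneg_left (dispersionBound_pos hβ 0).le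

lemma integral_norm_mul_sq_le_integral_sqrt_mul_sq
    (h₀ : Integrable fun k => ‖k‖ * φ k ^ 2)
    (h₁ : Integrable fun k => Real.sqrt (1 + ‖k‖ ^ 2) * φ k ^ 2) :
    ∫ k, ‖k‖ * φ k ^ 2 ≤ ∫ k, Real.sqrt (1 + ‖k‖ ^ 2) * φ k ^ 2 := by
  refine integral_mono h₀ h₁ fun k => mul_le_mul_of_nonneg_right ?_ (sq_nonneg _)
  exact Real.le_sqrt_of_sq_le (by linarith)

end Amat

theorem stmt10_general {d : ℕ} {β : ℝ} (hβ : 0 < β) {ω : ℂ} (hω : 0 < ω.re)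
    {φ : EuclideanSpace ℝ (Fin d) → ℝ} (hφ : Integrable fun k => ‖k‖ * φ k ^ 2) :
    (∀ a b : Fin d, ContDiff ℝ 1 (fun v₀ => Amat d β ω φ v₀ a b)) ∧
      ∀ (p : ℝ≥0∞) (g : EuclideanSpace ℝ (Fin d) → ℂ), 1 ≤ p → ContDiff ℝ 2 g →
        MemLp (iteratedFDeriv ℝ 2 g) p → MemLp (fderiv ℝ g) p →
        (eLpNorm (fun v₀ => ∑ a : Fin d, ∑ b : Fin d,
            fderiv ℝ (fun w => Amat d β ω φ w a b * fderiv ℝ g w (EuclideanSpace.single b 1))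
              v₀ (EuclideanSpace.single a 1)) p volume).toReal
          ≤ d ^ 2 * (dispersionBound β 0 + dispersionBound β 1) *
            ((∫ k, ‖k‖ * φ k ^ 2) * (eLpNorm (iteratedFDeriv ℝ 2 g) p volume).toReal +
              (∫ k, ‖k‖ * φ k ^ 2) * (eLpNorm (fderiv ℝ g) p volume).toReal) := by
  refine ⟨contDiff_Amat hβ hω hφ, fun p g hp hg hhess hgrad => ?_⟩
  have hB₀ := dispersionBound_pos hβ 0
  have hB₁ := dispersionBound_pos hβ 1
  rw [← mul_add, ← mul_assoc, mul_assoc (_ ^ 2)]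
  exact toReal_eLpNorm_le_mul_add_of_norm_le hp (by positivity) hhess hgrad
    fun v₀ => norm_div_Amat_grad_le hβ hω hφ hg.contDiffAt

/-- The matrix field `A` is `C¹` and the 'hat operator' `g ↦ div(A ∇g)` is controlled by
two velocity derivatives: `‖div(A∇g)‖₂ ≤ C (C₀ ‖∇²g‖₂ + C₁ ‖∇g‖₂)`, uniformly in the
spectral parameter `ω` (with `Re ω > 0`) and in `φ`. -/
theorem stmt10 (d : ℕ) (hd : 1 ≤ d) (β : ℝ) (hβ : 0 < β) :
    ∃ C : ℝ, 0 < C ∧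
      ∀ (ω : ℂ), 0 < ω.re →
      ∀ (φ : EuclideanSpace ℝ (Fin d) → ℝ), Measurable φ →
        Integrable (fun k : EuclideanSpace ℝ (Fin d) => ‖k‖ * (φ k) ^ 2) →
        Integrable (fun k : EuclideanSpace ℝ (Fin d) => Real.sqrt (1 + ‖k‖ ^ 2) * (φ k) ^ 2) →
        (∀ a b : Fin d, ContDiff ℝ 1 (fun v₀ => Amat d β ω φ v₀ a b)) ∧
        ∀ g : EuclideanSpace ℝ (Fin d) → ℂ,
          ContDiff ℝ (⊤ : ℕ∞) g → HasCompactSupport g →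
          (eLpNorm (fun v₀ => ∑ a : Fin d, ∑ b : Fin d,
              fderiv ℝ (fun w => Amat d β ω φ w a b * fderiv ℝ g w (EuclideanSpace.single b 1))
                v₀ (EuclideanSpace.single a 1)) 2 volume).toReal
            ≤ C * ((∫ k : EuclideanSpace ℝ (Fin d), ‖k‖ * (φ k) ^ 2) *
                  (eLpNorm (iteratedFDeriv ℝ 2 g) 2 volume).toReal
                + (∫ k : EuclideanSpace ℝ (Fin d), Real.sqrt (1 + ‖k‖ ^ 2) * (φ k) ^ 2) *
                  (eLpNorm (fderiv ℝ g) 2 volume).toReal) := by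
  have hB := add_pos (dispersionBound_pos hβ 0) (dispersionBound_pos hβ 1)
  refine ⟨d ^ 2 * (dispersionBound β 0 + dispersionBound β 1), by positivity,
    fun ω hω φ _ h₀ h₁ => ⟨(stmt10_general hβ hω h₀).1, fun g hg hgc => ?_⟩⟩
  have hC := integral_norm_mul_sq_le_integral_sqrt_mul_sq h₀ h₁
  refine ((stmt10_general hβ hω h₀).2 2 g one_le_two (hg.of_le (by norm_cast))
    (memLp_iteratedFDeriv_of_hasCompactSupport hg hgc (by norm_cast))
    (memLp_fderiv_of_hasCompactSupport hg hgc (by norm_num))).trans ?_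
  gcongr
end

section
/- Let n ≥ 1, d ≥ n−1, and let s ∈ ℝ with s > n − 1 − d. Then the function (k₁, …, k_n) ↦ ℋ^n( conv{0, k₁, …, k_n} )^s is locally integrable on (ℝ^d)^n: for every R > 0, ∫_{ {(k₁,…,k_n) : |k_i| ≤ R for all i} } ℋ^n( conv{0, k₁, …, k_n} )^s dk₁ … dk_n < ∞. (When s < 0 the integrand is interpreted as +∞ at points where the simplex has zero ℋ^n-measure; when d ≥ n this degenerate set is Lebesgue-null.) -/
open MeasureTheory
open scoped ENNReal

/-!
Write `g₁, …, gₙ` for the Gram–Schmidt family of `k₁, …, kₙ`. The change of basis is unitriangular,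
so the Gram determinant is `∏ ‖gᵢ‖²` and `ℋⁿ(conv {0, k₁, …, kₙ}) = σₙ ∏ ‖gᵢ‖`, where `σₙ` is the
measure of the simplex on the standard basis of `ℝⁿ`. Here `gᵢ` is the projection of `kᵢ` onto the
orthogonal complement of `V = span (k₁, …, kᵢ₋₁)`, and it does not depend on the later vectors.
Integrating out `kₙ, …, k₁` in turn, it suffices to bound the integral of `‖P x‖ ^ s` over a ball,
where `P` is the projection onto `Vᗮ`, uniformly in `V` with `dim V ≤ n - 1`. By Fubini along `V`
this reduces to the integrability of `‖y‖ ^ s` near the origin of `Vᗮ`, which holds because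
`s > n - 1 - d ≥ -dim Vᗮ`.
-/

open Metric Module Submodule InnerProductSpace
open scoped Matrix

section GramSchmidt

variable (𝕜 : Type*) {E ι : Type*} [RCLike 𝕜] [NormedAddCommGroup E] [InnerProductSpace 𝕜 E]
  [LinearOrder ι] [LocallyFiniteOrderBot ι] [WellFoundedLT ι]

theorem gramSchmidt_eq_starProjection_orthogonal (f : ι → E) (i : ι)
    [(span 𝕜 (f '' Set.Iio i)).HasOrthogonalProjection] :
    gramSchmidt 𝕜 f i = (span 𝕜 (f '' Set.Iio i))ᗮ.starProjection (f i) := by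
  refine (eq_starProjection_of_mem_orthogonal' ?_ (le_orthogonal_orthogonal _ ?_)
    (gramSchmidt_def'' 𝕜 f i)).symm
  · rw [← span_gramSchmidt_Iio, ← span_singleton_le_iff_mem, ← isOrtho_iff_le, isOrtho_span]
    rintro _ rfl _ ⟨j, hj, rfl⟩
    exact gramSchmidt_orthogonal 𝕜 f hj.ne'
  · rw [← span_gramSchmidt_Iio]
    exact sum_mem fun j hj ↦ smul_mem _ _ <|
      subset_span <| Set.mem_image_of_mem _ (Finset.mem_Iio.1 hj)

/-- The unitriangular matrix of the coordinates of `f` in its Gram–Schmidt family. The diagonal is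
set to `1` because the quotient vanishes there when `gramSchmidt 𝕜 f i = 0`. -/
noncomputable def gramSchmidtMatrix (f : ι → E) : Matrix ι ι 𝕜 := Matrix.of fun i j ↦
  if i = j then 1 else inner 𝕜 (gramSchmidt 𝕜 f i) (f j) / (‖gramSchmidt 𝕜 f i‖ : 𝕜) ^ 2

theorem isUpperTriangular_gramSchmidtMatrix (f : ι → E) :
    (gramSchmidtMatrix 𝕜 f).IsUpperTriangular := fun i j (hij : j < i) ↦ by
  simp [gramSchmidtMatrix, hij.ne', gramSchmidt_inv_triangular 𝕜 f hij]

variable [Fintype ι]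

theorem det_gramSchmidtMatrix (f : ι → E) : (gramSchmidtMatrix 𝕜 f).det = 1 := by
  rw [Matrix.det_of_isUpperTriangular (isUpperTriangular_gramSchmidtMatrix 𝕜 f)]
  simp [gramSchmidtMatrix]

theorem sum_gramSchmidtMatrix_smul_gramSchmidt (f : ι → E) (j : ι) :
    ∑ i, gramSchmidtMatrix 𝕜 f i j • gramSchmidt 𝕜 f i = f j := by
  have hvanish : ∀ i, i ∉ Finset.Iic j → gramSchmidtMatrix 𝕜 f i j • gramSchmidt 𝕜 f i = 0 :=
    fun i hi ↦ by
      rw [isUpperTriangular_gramSchmidtMatrix 𝕜 f (by simpa using hi : j < i), zero_smul]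
  rw [← Finset.sum_subset (Finset.subset_univ _) fun i _ ↦ hvanish i, ← Finset.Iio_insert,
    Finset.sum_insert Finset.notMem_Iio_self]
  conv_rhs => rw [gramSchmidt_def'' 𝕜 f j]
  congr 1
  · simp [gramSchmidtMatrix]
  · exact Finset.sum_congr rfl fun i hi ↦ by
      simp [gramSchmidtMatrix, (Finset.mem_Iio.1 hi).ne]

theorem gram_eq_gramSchmidtMatrix_conj (f : ι → E) :
    Matrix.gram 𝕜 f = (gramSchmidtMatrix 𝕜 f)ᴴ *
      Matrix.diagonal (fun i ↦ (‖gramSchmidt 𝕜 f i‖ : 𝕜) ^ 2) * gramSchmidtMatrix 𝕜 f := by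
  ext a b
  rw [Matrix.gram_apply, ← sum_gramSchmidtMatrix_smul_gramSchmidt 𝕜 f a,
    ← sum_gramSchmidtMatrix_smul_gramSchmidt 𝕜 f b, Matrix.mul_apply]
  simp only [sum_inner]
  refine Finset.sum_congr rfl fun i _ ↦ ?_
  rw [inner_sum, Finset.sum_eq_single i (fun j _ hji ↦ ?_) (by simp)]
  · rw [inner_smul_left, inner_smul_right, inner_self_eq_norm_sq_to_K, Matrix.mul_diagonal,
      Matrix.conjTranspose_apply, ← starRingEnd_apply]
    ring
  · rw [inner_smul_left, inner_smul_right, gramSchmidt_orthogonal 𝕜 f hji.symm]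
    simp

theorem det_gram_eq_prod_norm_gramSchmidt_sq (f : ι → E) :
    (Matrix.gram 𝕜 f).det = ∏ i, (‖gramSchmidt 𝕜 f i‖ : 𝕜) ^ 2 := by
  rw [gram_eq_gramSchmidtMatrix_conj, Matrix.det_mul, Matrix.det_mul, Matrix.det_conjTranspose,
    det_gramSchmidtMatrix, Matrix.det_diagonal, star_one, one_mul, mul_one]

end GramSchmidt

section Snoc

variable (𝕜 : Type*) {E : Type*} [RCLike 𝕜] [NormedAddCommGroup E] [InnerProductSpace 𝕜 E]
  {n : ℕ} (K : Fin n → E) (x : E)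

theorem gramSchmidt_snoc_castSucc (i : Fin n) :
    gramSchmidt 𝕜 (Fin.snoc K x : Fin (n + 1) → E) i.castSucc = gramSchmidt 𝕜 K i := by
  have hspan : (Fin.snoc K x : Fin (n + 1) → E) '' Set.Iio i.castSucc = K '' Set.Iio i := by
    simp [← Fin.image_castSucc_Iio, ← Set.image_comp]
  have : FiniteDimensional 𝕜 (span 𝕜 (K '' Set.Iio i)) := .span_of_finite _ (Set.toFinite _)
  have : FiniteDimensional 𝕜 (span 𝕜 ((Fin.snoc K x : Fin (n + 1) → E) '' Set.Iio i.castSucc)) :=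
    .span_of_finite _ (Set.toFinite _)
  simp only [gramSchmidt_eq_starProjection_orthogonal, hspan, Fin.snoc_castSucc]

theorem gramSchmidt_snoc_last [(span 𝕜 (Set.range K)).HasOrthogonalProjection] :
    gramSchmidt 𝕜 (Fin.snoc K x : Fin (n + 1) → E) (Fin.last n) =
      (span 𝕜 (Set.range K))ᗮ.starProjection x := by
  have hspan : (Fin.snoc K x : Fin (n + 1) → E) '' Set.Iio (Fin.last n) = Set.range K := by
    have hIio : Set.Iio (Fin.last n) = Set.range Fin.castSucc := by
      ext j
      rw [Set.mem_Iio, Set.mem_range, Fin.exists_castSucc_eq, Fin.lt_last_iff_ne_last]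
    rw [hIio, ← Set.range_comp]
    simp [Function.comp_def]
  have : FiniteDimensional 𝕜 (span 𝕜 ((Fin.snoc K x : Fin (n + 1) → E) '' Set.Iio (Fin.last n))) :=
    .span_of_finite _ (Set.toFinite _)
  simp only [gramSchmidt_eq_starProjection_orthogonal, hspan, Fin.snoc_last]

end Snoc

section Volume

theorem normDet_eq_prod_norm_gramSchmidt {𝕜 U E ι : Type*} [RCLike 𝕜] [NormedAddCommGroup U]
    [InnerProductSpace 𝕜 U] [FiniteDimensional 𝕜 U] [NormedAddCommGroup E] [InnerProductSpace 𝕜 E]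
    [LinearOrder ι] [LocallyFiniteOrderBot ι] [Fintype ι]
    (b : OrthonormalBasis ι 𝕜 U) (f : U →ₗ[𝕜] E) :
    f.normDet = ∏ i, ‖gramSchmidt 𝕜 (f <| b ·) i‖ := by
  rw [← sq_eq_sq₀ f.normDet_nonneg (by positivity), ← Finset.prod_pow]
  have hsq := (f.normDet_sq_eq_det_gram b).trans (det_gram_eq_prod_norm_gramSchmidt_sq 𝕜 (f <| b ·))
  exact_mod_cast hsq

/-- The simplex in `ℝⁿ` spanned by the origin and the standard basis vectors, of which every simplex
`conv {0, k₁, …, kₙ}` is the image under a linear map. -/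
def cornerSimplex (n : ℕ) : Set (EuclideanSpace ℝ (Fin n)) :=
  convexHull ℝ (insert 0 (Set.range (EuclideanSpace.basisFun (Fin n) ℝ)))

theorem nonempty_interior_cornerSimplex (n : ℕ) : (interior (cornerSimplex n)).Nonempty := by
  rw [cornerSimplex, interior_convexHull_nonempty_iff_affineSpan_eq_top,
    ← AffineSubspace.coe_eq_univ_iff, affineSpan_insert_zero, ← OrthonormalBasis.coe_toBasis,
    Basis.span_eq, top_coe]

theorem isAddHaarMeasure_hausdorffMeasure_euclideanSpace (n : ℕ) :
    (μH[(n : ℝ)] : Measure (EuclideanSpace ℝ (Fin n))).IsAddHaarMeasure := by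
  simpa using isAddHaarMeasure_hausdorffMeasure (E := EuclideanSpace ℝ (Fin n))

theorem hausdorffMeasure_cornerSimplex_ne_zero (n : ℕ) : μH[(n : ℝ)] (cornerSimplex n) ≠ 0 := by
  have := isAddHaarMeasure_hausdorffMeasure_euclideanSpace n
  exact (Measure.measure_pos_of_nonempty_interior _ (nonempty_interior_cornerSimplex n)).ne'

theorem hausdorffMeasure_cornerSimplex_ne_top (n : ℕ) : μH[(n : ℝ)] (cornerSimplex n) ≠ ⊤ := by
  have := isAddHaarMeasure_hausdorffMeasure_euclideanSpace n
  exact ((Set.finite_range _).insert 0).isCompact_convexHull ℝ |>.measure_ne_top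

variable {E : Type*} [NormedAddCommGroup E] [InnerProductSpace ℝ E] {n : ℕ} (K : Fin n → E)

theorem convexHull_insert_zero_range_eq_image_cornerSimplex :
    convexHull ℝ (insert 0 (Set.range K)) =
      (EuclideanSpace.basisFun (Fin n) ℝ).toBasis.constr ℝ K '' cornerSimplex n := by
  rw [cornerSimplex, LinearMap.image_convexHull, Set.image_insert_eq, map_zero, ← Set.range_comp]
  congr 3 with i
  simp

variable [MeasurableSpace E] [BorelSpace E]

theorem hausdorffMeasure_convexHull_insert_zero_range :
    μH[(n : ℝ)] (convexHull ℝ (insert 0 (Set.range K))) =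
      (∏ i, ‖gramSchmidt ℝ K i‖ₑ) * μH[(n : ℝ)] (cornerSimplex n) := by
  set b := EuclideanSpace.basisFun (Fin n) ℝ
  set f := b.toBasis.constr ℝ K with hf
  have hfb : (f <| b ·) = K := funext fun i ↦ by
    rw [hf, ← b.coe_toBasis, Basis.constr_basis]
  have himage := f.hausdorffMeasure_image (cornerSimplex n)
  rw [finrank_euclideanSpace_fin] at himage
  rw [convexHull_insert_zero_range_eq_image_cornerSimplex, ← hf, himage,
    normDet_eq_prod_norm_gramSchmidt b, hfb, ENNReal.ofReal_prod_of_nonneg fun _ _ ↦ norm_nonneg _]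
  simp only [ofReal_norm]

theorem hausdorffMeasure_convexHull_insert_zero_range_rpow (s : ℝ) :
    μH[(n : ℝ)] (convexHull ℝ (insert 0 (Set.range K))) ^ s =
      (∏ i, ‖gramSchmidt ℝ K i‖ₑ ^ s) * μH[(n : ℝ)] (cornerSimplex n) ^ s := by
  rw [hausdorffMeasure_convexHull_insert_zero_range, ENNReal.mul_rpow_of_ne_top
    (ENNReal.prod_ne_top fun _ _ ↦ enorm_ne_top) (hausdorffMeasure_cornerSimplex_ne_top n),
    ENNReal.prod_rpow_of_ne_top fun _ _ ↦ enorm_ne_top]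

end Volume

section Tonelli

theorem lintegral_pi_le_lintegral_snoc {α : Type*} [MeasurableSpace α] (μ : Measure α)
    [SigmaFinite μ] {n : ℕ} (F : (Fin (n + 1) → α) → ℝ≥0∞) :
    ∫⁻ K, F K ∂Measure.pi (fun _ ↦ μ) ≤
      ∫⁻ K : Fin n → α, ∫⁻ x, F (Fin.snoc K x) ∂μ ∂Measure.pi (fun _ ↦ μ) := by
  let e := MeasurableEquiv.prodComm.trans
    (MeasurableEquiv.piFinSuccAbove (fun _ : Fin (n + 1) ↦ α) (Fin.last n)).symm
  have he : MeasurePreserving e ((Measure.pi fun _ ↦ μ).prod μ) (Measure.pi fun _ ↦ μ) :=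
    (measurePreserving_piFinSuccAbove (fun _ ↦ μ) (Fin.last n)).symm.comp
      Measure.measurePreserving_swap
  have he_apply : ∀ K x, e (K, x) = Fin.snoc K x := by
    simp [e, MeasurableEquiv.piFinSuccAbove, Fin.insertNthEquiv, MeasurableEquiv.prodComm]
  rw [← he.lintegral_comp_emb e.measurableEmbedding]
  simpa only [he_apply] using lintegral_prod_le (fun p ↦ F (e p))

theorem restrict_pi_setOf_norm_le {ι E : Type*} [Fintype ι] [SeminormedAddCommGroup E]
    [MeasurableSpace E] (μ : Measure E) [SigmaFinite μ] (R : ℝ) :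
    (Measure.pi fun _ : ι ↦ μ).restrict {K | ∀ i, ‖K i‖ ≤ R} =
      Measure.pi fun _ ↦ μ.restrict (closedBall 0 R) := by
  have hset : {K : ι → E | ∀ i, ‖K i‖ ≤ R} = Set.univ.pi fun _ ↦ closedBall 0 R := by
    ext K
    simp
  rw [hset, Measure.restrict_pi_pi]

end Tonelli

section Radial

variable {E F : Type*} [NormedAddCommGroup E] [InnerProductSpace ℝ E] [FiniteDimensional ℝ E]
  [MeasurableSpace E] [BorelSpace E] [NormedAddCommGroup F] [InnerProductSpace ℝ F]
  [FiniteDimensional ℝ F] [MeasurableSpace F] [BorelSpace F]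

theorem setLIntegral_closedBall_enorm_eq_of_finrank_eq (h : finrank ℝ E = finrank ℝ F)
    (φ : ℝ≥0∞ → ℝ≥0∞) (R : ℝ) :
    ∫⁻ x in closedBall (0 : E) R, φ ‖x‖ₑ = ∫⁻ y in closedBall (0 : F) R, φ ‖y‖ₑ := by
  let e : E ≃ₗᵢ[ℝ] F :=
    (stdOrthonormalBasis ℝ E).equiv (stdOrthonormalBasis ℝ F) (finCongr h)
  have hball : e ⁻¹' closedBall 0 R = closedBall 0 R := by simp
  rw [← e.measurePreserving.setLIntegral_comp_preimage_emb
    e.toHomeomorph.measurableEmbedding, hball]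
  simp

theorem setLIntegral_closedBall_enorm_rpow_lt_top {s : ℝ} (hs : -(finrank ℝ E : ℝ) < s) (R : ℝ) :
    ∫⁻ x in closedBall (0 : E) R, ‖x‖ₑ ^ s < ⊤ := by
  rcases subsingleton_or_nontrivial E with hE | hE
  · have hs0 : 0 < s := by simpa [finrank_zero_of_subsingleton] using hs
    simp [Subsingleton.eq_zero, ENNReal.zero_rpow_of_pos hs0]
  · have hint : LocallyIntegrable (fun x : E ↦ ‖x‖ ^ s) volume := by
      refine locallyIntegrable_of_norm_le_rpow (C := 1) (α := -s) finrank_pos (by linarith)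
        (ae_of_all _ fun x ↦ ?_) (measurable_norm.pow_const s).aestronglyMeasurable
      rw [neg_neg, one_mul, Real.norm_of_nonneg (by positivity)]
    have hne : ∀ᵐ x : E ∂volume.restrict (closedBall 0 R), x ≠ 0 :=
      Measure.ae_ne _ 0
    calc ∫⁻ x in closedBall (0 : E) R, ‖x‖ₑ ^ s
        = ∫⁻ x in closedBall (0 : E) R, ‖‖x‖ ^ s‖ₑ := by
          refine lintegral_congr_ae (hne.mono fun x hx ↦ ?_)
          dsimp only
          rw [Real.enorm_of_nonneg (by positivity),
            ← ENNReal.ofReal_rpow_of_pos (norm_pos_iff.2 hx), ofReal_norm]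
      _ < ⊤ := (hint.integrableOn_isCompact (isCompact_closedBall 0 R)).hasFiniteIntegral

theorem measurePreserving_orthogonalProjectionOnto_prodMk (V : Submodule ℝ E) :
    MeasurePreserving
      fun x : E ↦ (V.orthogonalProjectionOnto x, Vᗮ.orthogonalProjectionOnto x) := by
  simpa only [Function.comp_def, orthogonalDecomposition_apply] using
    (WithLp.volume_preserving_ofLp V Vᗮ).comp V.orthogonalDecomposition.measurePreserving

theorem setLIntegral_closedBall_comp_starProjection_orthogonal_le (V : Submodule ℝ E)
    {g : E → ℝ≥0∞} (hg : Measurable g) (R : ℝ) :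
    ∫⁻ x in closedBall (0 : E) R, g (Vᗮ.starProjection x) ≤
      volume (closedBall (0 : V) R) * ∫⁻ y in closedBall (0 : Vᗮ) R, g y := by
  let e : E → V × Vᗮ := fun x ↦ (V.orthogonalProjectionOnto x, Vᗮ.orthogonalProjectionOnto x)
  have he : MeasurePreserving e := measurePreserving_orthogonalProjectionOnto_prodMk V
  have hball : closedBall (0 : E) R ⊆ e ⁻¹' (closedBall 0 R ×ˢ closedBall 0 R) := fun x hx ↦ by
    have hx' : ‖x‖ ≤ R := mem_closedBall_zero_iff.1 hx
    exact ⟨mem_closedBall_zero_iff.2 ((V.norm_orthogonalProjectionOnto_apply_le x).trans hx'),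
      mem_closedBall_zero_iff.2 ((Vᗮ.norm_orthogonalProjectionOnto_apply_le x).trans hx')⟩
  calc ∫⁻ x in closedBall (0 : E) R, g (Vᗮ.starProjection x)
      ≤ ∫⁻ x in e ⁻¹' (closedBall 0 R ×ˢ closedBall 0 R), g (e x).2 := lintegral_mono_set hball
    _ = ∫⁻ p in (closedBall 0 R ×ˢ closedBall 0 R : Set (V × Vᗮ)), g p.2 :=
        he.setLIntegral_comp_preimage (f := fun p ↦ g p.2)
          (isClosed_closedBall.prod isClosed_closedBall).measurableSet (by fun_prop)
    _ = volume (closedBall (0 : V) R) * ∫⁻ y in closedBall (0 : Vᗮ) R, g y := by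
        rw [Measure.volume_eq_prod, ← Measure.prod_restrict]
        simpa using lintegral_prod_mul (f := fun _ : V ↦ 1) (g := fun y : Vᗮ ↦ g y)
          (μ := volume.restrict (closedBall 0 R)) (ν := volume.restrict (closedBall 0 R))
          (by fun_prop) (by fun_prop)

theorem setLIntegral_closedBall_enorm_starProjection_orthogonal_le (V : Submodule ℝ E)
    {φ : ℝ≥0∞ → ℝ≥0∞} (hφ : Measurable φ) (R : ℝ) :
    ∫⁻ x in closedBall (0 : E) R, φ ‖Vᗮ.starProjection x‖ₑ ≤
      volume (closedBall (0 : EuclideanSpace ℝ (Fin (finrank ℝ V))) R) *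
        ∫⁻ y in closedBall (0 : EuclideanSpace ℝ (Fin (finrank ℝ E - finrank ℝ V))) R, φ ‖y‖ₑ := by
  have hVperp : finrank ℝ Vᗮ = finrank ℝ E - finrank ℝ V := by
    rw [← V.finrank_add_finrank_orthogonal, Nat.add_sub_cancel_left]
  have hvol : volume (closedBall (0 : V) R) =
      volume (closedBall (0 : EuclideanSpace ℝ (Fin (finrank ℝ V))) R) := by
    simpa using setLIntegral_closedBall_enorm_eq_of_finrank_eq (E := V)
      (F := EuclideanSpace ℝ (Fin (finrank ℝ V))) (by simp) (fun _ ↦ 1) R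
  rw [← hvol, ← setLIntegral_closedBall_enorm_eq_of_finrank_eq (E := Vᗮ) (by simp [hVperp]) φ R]
  exact setLIntegral_closedBall_comp_starProjection_orthogonal_le V (hφ.comp measurable_enorm) R

theorem exists_forall_setLIntegral_enorm_starProjection_orthogonal_rpow_le (n : ℕ) {s : ℝ}
    (hs : (n : ℝ) - 1 - finrank ℝ E < s) (R : ℝ) :
    ∃ C : ℝ≥0∞, C ≠ ⊤ ∧ ∀ V : Submodule ℝ E, finrank ℝ V < n →
      ∫⁻ x in closedBall (0 : E) R, ‖Vᗮ.starProjection x‖ₑ ^ s ≤ C := by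
  let c : ℕ → ℝ≥0∞ := fun j ↦ volume (closedBall (0 : EuclideanSpace ℝ (Fin j)) R) *
    ∫⁻ y in closedBall (0 : EuclideanSpace ℝ (Fin (finrank ℝ E - j))) R, ‖y‖ₑ ^ s
  let J : Finset ℕ := {j ∈ Finset.range n | j ≤ finrank ℝ E}
  have hc : ∀ j ∈ J, c j < ⊤ := fun j hj ↦ by
    obtain ⟨hjn, hjE⟩ := Finset.mem_filter.1 hj
    have hjn' : (j : ℝ) + 1 ≤ n := by exact_mod_cast Finset.mem_range.1 hjn
    refine ENNReal.mul_lt_top measure_closedBall_lt_top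
      (setLIntegral_closedBall_enorm_rpow_lt_top ?_ R)
    rw [finrank_euclideanSpace_fin, Nat.cast_sub hjE]
    linarith
  refine ⟨∑ j ∈ J, c j, (ENNReal.sum_lt_top.2 hc).ne, fun V hV ↦ ?_⟩
  calc ∫⁻ x in closedBall (0 : E) R, ‖Vᗮ.starProjection x‖ₑ ^ s
      ≤ c (finrank ℝ V) :=
        setLIntegral_closedBall_enorm_starProjection_orthogonal_le V
          (measurable_id.pow_const s) R
    _ ≤ ∑ j ∈ J, c j := Finset.single_le_sum (fun _ _ ↦ zero_le)
        (Finset.mem_filter.2 ⟨Finset.mem_range.2 hV, V.finrank_le⟩)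

end Radial

section Iteration

variable {E : Type*} [NormedAddCommGroup E] [InnerProductSpace ℝ E] [FiniteDimensional ℝ E]
  [MeasurableSpace E] [BorelSpace E]

theorem lintegral_pi_prod_gramSchmidt_le (μ : Measure E) [SigmaFinite μ] {g : E → ℝ≥0∞}
    (hg : Measurable g) {n : ℕ} {C : ℝ≥0∞} (hC : C ≠ ⊤)
    (hV : ∀ V : Submodule ℝ E, finrank ℝ V < n → ∫⁻ x, g (Vᗮ.starProjection x) ∂μ ≤ C) :
    ∫⁻ K : Fin n → E, ∏ i, g (gramSchmidt ℝ K i) ∂Measure.pi (fun _ ↦ μ) ≤ C ^ n := by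
  induction n with
  | zero => simp
  | succ n ih =>
    have hslice : ∀ K : Fin n → E,
        ∫⁻ x, g ((span ℝ (Set.range K))ᗮ.starProjection x) ∂μ ≤ C := fun K ↦
      hV _ <| (finrank_range_le_card (R := ℝ) K).trans_lt (by simp)
    calc ∫⁻ K : Fin (n + 1) → E, ∏ i, g (gramSchmidt ℝ K i) ∂Measure.pi (fun _ ↦ μ)
        ≤ ∫⁻ K : Fin n → E, ∫⁻ x, ∏ i, g (gramSchmidt ℝ (Fin.snoc K x : Fin (n + 1) → E) i) ∂μ
            ∂Measure.pi (fun _ ↦ μ) := lintegral_pi_le_lintegral_snoc μ _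
      _ = ∫⁻ K : Fin n → E, (∏ i, g (gramSchmidt ℝ K i)) *
            ∫⁻ x, g ((span ℝ (Set.range K))ᗮ.starProjection x) ∂μ ∂Measure.pi (fun _ ↦ μ) := by
          refine lintegral_congr fun K ↦ ?_
          simp only [Fin.prod_univ_castSucc, gramSchmidt_snoc_castSucc, gramSchmidt_snoc_last]
          exact lintegral_const_mul _ (by fun_prop)
      _ ≤ ∫⁻ K : Fin n → E, (∏ i, g (gramSchmidt ℝ K i)) * C ∂Measure.pi (fun _ ↦ μ) := by
          gcongr with K
          exact hslice K
      _ = (∫⁻ K : Fin n → E, ∏ i, g (gramSchmidt ℝ K i) ∂Measure.pi (fun _ ↦ μ)) * C :=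
          lintegral_mul_const' _ _ hC
      _ ≤ C ^ (n + 1) := by
          rw [pow_succ]
          gcongr
          exact ih fun V hVn ↦ hV V (hVn.trans n.lt_succ_self)

theorem stmt14_general (n : ℕ) {s : ℝ} (hs : (n : ℝ) - 1 - finrank ℝ E < s) (R : ℝ) :
    ∫⁻ K in {K : Fin n → E | ∀ i, ‖K i‖ ≤ R},
        (μH[(n : ℝ)] (convexHull ℝ (insert 0 (Set.range K)))) ^ s < ⊤ := by
  obtain ⟨C, hC, hslice⟩ :=
    exists_forall_setLIntegral_enorm_starProjection_orthogonal_rpow_le (E := E) n hs R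
  have hσ : μH[(n : ℝ)] (cornerSimplex n) ^ s ≠ ⊤ :=
    ENNReal.rpow_ne_top_of_ne_zero (hausdorffMeasure_cornerSimplex_ne_zero n)
      (hausdorffMeasure_cornerSimplex_ne_top n)
  simp only [hausdorffMeasure_convexHull_insert_zero_range_rpow, lintegral_mul_const' _ _ hσ,
    volume_pi, restrict_pi_setOf_norm_le]
  refine ENNReal.mul_lt_top ?_ hσ.lt_top
  exact (lintegral_pi_prod_gramSchmidt_le _ (measurable_enorm.pow_const s) hC hslice).trans_lt
    (ENNReal.pow_lt_top hC.lt_top)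

end Iteration

/-- Local integrability of negative powers of the simplex volume: if `d ≥ n−1` and
`s > n−1−d`, then `(k₁,…,k_n) ↦ ℋ^n(conv{0,k₁,…,k_n})^s` is integrable on products of
balls (with the convention `0^s = ∞` for `s < 0` in `ℝ≥0∞`). -/
theorem stmt14 (n d : ℕ) (hn : 1 ≤ n) (hd : n - 1 ≤ d)
    (s : ℝ) (hs : (n : ℝ) - 1 - d < s) (R : ℝ) (hR : 0 < R) :
    ∫⁻ K in {K : Fin n → EuclideanSpace ℝ (Fin d) | ∀ i, ‖K i‖ ≤ R},
        (μH[(n : ℝ)] (convexHull ℝ (insert 0 (Set.range K)))) ^ s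
      < ⊤ :=
  stmt14_general n (by simpa using hs) R
end
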